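/- arXiv:2210.05522 — 3 statements merged into one kernel-verified Lean document; each statement's English description precedes it below -/
import Mathlib

section
/- Let k ≥ 1 and let C be a k×k complex matrix. Define the antisymmetric 2k×2k complex matrix M by M(i, k+j) = C(i,j) and M(k+j, i) = −C(i,j) for 1 ≤ i, j ≤ k, and M(i,j) = 0 whenever both i,j ≤ k or both i,j > k. Then the signed sum over all contractions σ of order 2k, Σ_σ ε(σ) ∏_{i=1}^{k} M(σ(2i−1), σ(2i)), where ε(σ) is the signature of σ, equals (−1)^{k(k−1)/2} det C. (This is the fermionic case of Wick's theorem reduced to its combinatorial content: signed pairings of k creation and k annihilation operators in which two operators of the same type are paired contribute zero, and the surviving cross-pairings sum, up to the stated sign, to a determinant.) -/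
/-!
A contraction contributes only if every pair `(σ(2i), σ(2i+1))` joins the two blocks
`{0,…,k-1}` and `{k,…,2k-1}`. As `σ(2i) < σ(2i+1)`, the first entry then lies in the lower block
and the second in the upper one; since `i ↦ σ(2i)` is strictly increasing, `σ(2i) = i`. So
`σ(2i+1) = k + τ(i)` for a unique permutation `τ` of `Fin k`, and conversely each `τ` gives a
contraction `wickPerm τ` (`exists_wickPerm_eq`, `isContraction_wickPerm`).

The permutation `wickPerm τ` is `τ` acting on the upper block, composed with the fixed shuffle
`2i ↦ i`, `2i+1 ↦ k+i`. The inversions of the shuffle are the pairs of positions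
`2a+1 < 2b` with `a < b`, so its sign is `(-1)^(k(k-1)/2)` (`sign_shuffle`). The sum is therefore
this sign times the Leibniz expansion of `det C`.
-/

/-- A *contraction* of order `2*k` is a permutation `σ` of `{1,…,2k}` (here `Fin (2*k)`,
0-indexed) such that `σ(2i−1)` is increasing in `i` over the odd positions and
`σ(2i−1) < σ(2i)` for every `i = 1,…,k`. -/
def IsContraction {k : ℕ} (σ : Equiv.Perm (Fin (2 * k))) : Prop :=
  (∀ i j : Fin k, i < j →
      σ ⟨2 * i.val, by have := i.isLt; omega⟩ < σ ⟨2 * j.val, by have := j.isLt; omega⟩) ∧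
  (∀ i : Fin k,
      σ ⟨2 * i.val, by have := i.isLt; omega⟩ < σ ⟨2 * i.val + 1, by have := i.isLt; omega⟩)

instance {k : ℕ} (σ : Equiv.Perm (Fin (2 * k))) : Decidable (IsContraction σ) := by
  unfold IsContraction; infer_instance

namespace FermionicWick

open Equiv

/-- `Fin k ⊕ Fin k` identified with `Fin (2 * k)` blockwise: `inl i ↦ i`, `inr j ↦ k + j`. -/
def blockEquiv (k : ℕ) : Fin k ⊕ Fin k ≃ Fin (2 * k) :=
  finSumFinEquiv.trans (finCongr (two_mul k).symm)

lemma blockEquiv_inl {k : ℕ} (i : Fin k) : (blockEquiv k (.inl i)).val = i.val := rfl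

lemma blockEquiv_inr {k : ℕ} (i : Fin k) : (blockEquiv k (.inr i)).val = k + i.val := rfl

/-- `Fin k ⊕ Fin k` identified with `Fin (2 * k)` by parity: `inl i ↦ 2i`, `inr i ↦ 2i + 1`. -/
def parityEquiv (k : ℕ) : Fin k ⊕ Fin k ≃ Fin (2 * k) where
  toFun := Sum.elim (fun i => ⟨2 * i.val, by have := i.isLt; omega⟩)
    (fun i => ⟨2 * i.val + 1, by have := i.isLt; omega⟩)
  invFun x := if x.val % 2 = 0 then .inl ⟨x.val / 2, by have := x.isLt; omega⟩
    else .inr ⟨x.val / 2, by have := x.isLt; omega⟩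
  left_inv := by
    rintro (i | i)
    · simp
    · have h : (2 * i.val + 1) / 2 = i.val := by omega
      simp [h]
  right_inv x := by
    by_cases h : x.val % 2 = 0
    · simp only [h, if_true, Sum.elim_inl]
      ext
      simp only
      omega
    · simp only [h, if_false, Sum.elim_inr]
      ext
      simp only
      omega

/-- The shuffle `2i ↦ i`, `2i + 1 ↦ k + i`. -/
def shuffle (k : ℕ) : Perm (Fin (2 * k)) := (parityEquiv k).symm.trans (blockEquiv k)

/-- The permutation `2i ↦ i`, `2i + 1 ↦ k + τ i`. -/
def wickPerm {k : ℕ} (τ : Perm (Fin k)) : Perm (Fin (2 * k)) :=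
  (blockEquiv k).permCongr (Perm.sumCongr 1 τ) * shuffle k

lemma wickPerm_even {k : ℕ} (τ : Perm (Fin k)) (i : Fin k) (h : 2 * i.val < 2 * k) :
    wickPerm τ ⟨2 * i.val, h⟩ = ⟨i.val, by have := i.isLt; omega⟩ := by
  have h' : (⟨2 * i.val, h⟩ : Fin (2 * k)) = parityEquiv k (.inl i) := rfl
  rw [h']
  ext
  simp [wickPerm, shuffle, blockEquiv_inl]

lemma wickPerm_odd {k : ℕ} (τ : Perm (Fin k)) (i : Fin k) (h : 2 * i.val + 1 < 2 * k) :
    wickPerm τ ⟨2 * i.val + 1, h⟩ = ⟨k + (τ i).val, by have := (τ i).isLt; omega⟩ := by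
  have h' : (⟨2 * i.val + 1, h⟩ : Fin (2 * k)) = parityEquiv k (.inr i) := rfl
  rw [h']
  ext
  simp [wickPerm, shuffle, blockEquiv_inr]

lemma isContraction_wickPerm {k : ℕ} (τ : Perm (Fin k)) : IsContraction (wickPerm τ) := by
  refine ⟨fun i j hij => ?_, fun i => ?_⟩
  · rw [wickPerm_even, wickPerm_even]
    exact hij
  · rw [wickPerm_even, wickPerm_odd, Fin.mk_lt_mk]
    have := i.isLt
    omega

lemma wickPerm_injective {k : ℕ} : Function.Injective (wickPerm (k := k)) := by
  intro τ τ' h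
  ext i
  have hi : 2 * i.val + 1 < 2 * k := by have := i.isLt; omega
  have := congrArg (fun σ => (σ ⟨2 * i.val + 1, hi⟩).val) h
  simpa [wickPerm_odd] using this

/-- The inversions of the shuffle ending at position `2b` start at the positions `2a + 1` with
`a < b`, and none ends at an odd position. -/
lemma sign_shuffle (k : ℕ) : Perm.sign (shuffle k) = (-1) ^ (k * (k - 1) / 2) := by
  have hl (i : Fin k) : (shuffle k (parityEquiv k (.inl i))).val = i.val := by
    simp [shuffle, blockEquiv_inl]
  have hr (i : Fin k) : (shuffle k (parityEquiv k (.inr i))).val = k + i.val := by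
    simp [shuffle, blockEquiv_inr]
  have pl (i : Fin k) : (parityEquiv k (.inl i)).val = 2 * i.val := rfl
  have pr (i : Fin k) : (parityEquiv k (.inr i)).val = 2 * i.val + 1 := rfl
  have key (j : Fin (2 * k)) :
      (∏ i ∈ Finset.Iio j, if shuffle k i < shuffle k j then (1 : ℤˣ) else -1)
      = ∏ x : Fin k ⊕ Fin k, if parityEquiv k x < j then
          (if shuffle k (parityEquiv k x) < shuffle k j then (1 : ℤˣ) else -1) else 1 := by
    rw [(parityEquiv k).prod_comp (fun i => if i < j then
      (if shuffle k i < shuffle k j then (1 : ℤˣ) else -1) else 1), ← Finset.prod_filter]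
    congr 1
    ext; simp
  rw [Perm.sign_eq_prod_prod_Iio, ← (parityEquiv k).prod_comp, Fintype.prod_sum_type]
  have hodd (b : Fin k) : (∏ i ∈ Finset.Iio (parityEquiv k (.inr b)),
      if shuffle k i < shuffle k (parityEquiv k (.inr b)) then (1 : ℤˣ) else -1) = 1 := by
    rw [key]
    refine Finset.prod_eq_one ?_
    rintro (a | a) -
    · have := a.isLt
      rw [if_pos (c := shuffle k _ < _) (by rw [Fin.lt_def, hl, hr]; omega), ite_self]
    · by_cases h : a < b
      · rw [if_pos (c := shuffle k _ < _) (by rw [Fin.lt_def, hr, hr]; omega), ite_self]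
      · rw [if_neg]
        rw [Fin.lt_def, pr, pr]; omega
  have heven (b : Fin k) : (∏ i ∈ Finset.Iio (parityEquiv k (.inl b)),
      if shuffle k i < shuffle k (parityEquiv k (.inl b)) then (1 : ℤˣ) else -1)
      = (-1) ^ b.val := by
    rw [key, Fintype.prod_sum_type, Finset.prod_eq_one, one_mul]
    · have : ∀ a : Fin k, (if parityEquiv k (.inr a) < parityEquiv k (.inl b) then
          (if shuffle k (parityEquiv k (.inr a)) < shuffle k (parityEquiv k (.inl b))
            then (1 : ℤˣ) else -1) else 1) = if a < b then -1 else 1 := by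
        intro a
        have := b.isLt
        rw [if_neg (c := shuffle k _ < _) (by rw [Fin.lt_def, hl, hr]; omega)]
        refine if_congr ?_ rfl rfl
        rw [Fin.lt_def, pl, pr]; omega
      simp_rw [this]
      rw [← Finset.prod_filter, Finset.prod_const]
      congr 1
      rw [← Fin.card_Iio b]
      congr 1
      ext; simp
    · intro a _
      by_cases h : a < b
      · rw [if_pos (c := shuffle k _ < _) (by rw [Fin.lt_def, hl, hl]; omega), ite_self]
      · rw [if_neg]
        rw [Fin.lt_def, pl, pl]; omega
  simp_rw [hodd, heven]
  rw [Finset.prod_const_one, mul_one, Finset.prod_pow_eq_pow_sum,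
    Fin.sum_univ_eq_sum_range (fun i => i), Finset.sum_range_id]

lemma sign_wickPerm {k : ℕ} (τ : Perm (Fin k)) :
    Perm.sign (wickPerm τ) = (-1) ^ (k * (k - 1) / 2) * Perm.sign τ := by
  rw [wickPerm, Perm.sign_mul, Perm.sign_permCongr, Perm.sign_sumCongr, sign_shuffle]
  simp [mul_comm]

/-- A contraction all of whose pairs join the lower to the upper block comes from some `τ`. -/
lemma exists_wickPerm_eq {k : ℕ} {σ : Perm (Fin (2 * k))} (hσ : IsContraction σ)
    (hlow : ∀ i : Fin k, (σ ⟨2 * i.val, by have := i.isLt; omega⟩).val < k)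
    (hup : ∀ i : Fin k, k ≤ (σ ⟨2 * i.val + 1, by have := i.isLt; omega⟩).val) :
    ∃ τ, wickPerm τ = σ := by
  let f : Fin k → Fin k := fun i => ⟨_, hlow i⟩
  have hf : StrictMono f := fun i j hij => hσ.1 i j hij
  -- a strictly increasing self-map of `Fin k` is the identity
  have hfid : f = id := (hf.range_inj strictMono_id).1
    (by rw [(Finite.injective_iff_surjective.1 hf.injective).range_eq, Set.range_id])
  let g : Fin k → Fin k := fun i => ⟨(σ ⟨2 * i.val + 1, by have := i.isLt; omega⟩).val - k, by
    have := (σ ⟨2 * i.val + 1, by have := i.isLt; omega⟩).isLt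
    have := i.isLt
    omega⟩
  have hg : Function.Injective g := by
    intro i j hij
    have h1 := hup i
    have h2 := hup j
    have h3 : _ - k = _ - k := congrArg Fin.val hij
    have h4 := σ.injective (Fin.ext (by omega :
      (σ ⟨2 * i.val + 1, by have := i.isLt; omega⟩).val
        = (σ ⟨2 * j.val + 1, by have := j.isLt; omega⟩).val))
    rw [Fin.mk.injEq] at h4
    omega
  refine ⟨Equiv.ofBijective g (Finite.injective_iff_bijective.1 hg), ?_⟩
  ext x
  obtain ⟨y, rfl⟩ := (parityEquiv k).surjective x
  rcases y with i | i
  · have h := congrArg Fin.val (congrFun hfid i)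
    exact (congrArg Fin.val (wickPerm_even _ i _)).trans h.symm
  · refine (congrArg Fin.val (wickPerm_odd _ i _)).trans ?_
    exact Nat.add_sub_cancel' (hup i)

end FermionicWick

open FermionicWick in
/-- **Fermionic Wick theorem, combinatorial content.** Let `C` be a `k×k` complex
matrix and `M` the antisymmetric `2k×2k` matrix with `M(i, k+j) = C(i,j)`,
`M(k+j, i) = −C(i,j)`, and `M(i,j) = 0` when `i,j` are both `≤ k` or both `> k`.
Then the signed sum over all contractions `σ` of order `2k`,
`Σ_σ ε(σ) ∏_{i=1}^k M(σ(2i−1), σ(2i))`, equals `(−1)^{k(k−1)/2} det C`. -/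
theorem fermionic_wick_sum_contractions_eq_det (k : ℕ) (hk : 1 ≤ k)
    (C : Matrix (Fin k) (Fin k) ℂ) (M : Fin (2 * k) → Fin (2 * k) → ℂ)
    (hM1 : ∀ i j : Fin k,
      M ⟨i.val, by have := i.isLt; omega⟩ ⟨k + j.val, by have := j.isLt; omega⟩ = C i j)
    (hM2 : ∀ i j : Fin k,
      M ⟨k + j.val, by have := j.isLt; omega⟩ ⟨i.val, by have := i.isLt; omega⟩ = -C i j)
    (hM0 : ∀ i j : Fin (2 * k),
      ((i.val < k ∧ j.val < k) ∨ (k ≤ i.val ∧ k ≤ j.val)) → M i j = 0) :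
    ∑ σ ∈ Finset.univ.filter (fun σ : Equiv.Perm (Fin (2 * k)) => IsContraction σ),
        ((Equiv.Perm.sign σ : ℤ) : ℂ) *
          ∏ i : Fin k,
            M (σ ⟨2 * i.val, by have := i.isLt; omega⟩)
              (σ ⟨2 * i.val + 1, by have := i.isLt; omega⟩)
      = (-1 : ℂ) ^ (k * (k - 1) / 2) * Matrix.det C := by
  have hmap : (Finset.univ.image (wickPerm (k := k))) ⊆
      Finset.univ.filter (fun σ : Equiv.Perm (Fin (2 * k)) => IsContraction σ) := by
    intro σ h
    obtain ⟨τ, -, rfl⟩ := Finset.mem_image.1 h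
    exact Finset.mem_filter.2 ⟨Finset.mem_univ _, isContraction_wickPerm τ⟩
  rw [← Finset.sum_subset hmap, Finset.sum_image wickPerm_injective.injOn, ← Matrix.det_transpose,
    Matrix.det_apply', Finset.mul_sum]
  · refine Finset.sum_congr rfl fun τ _ => ?_
    simp_rw [wickPerm_even, wickPerm_odd, hM1, sign_wickPerm, Matrix.transpose_apply]
    push_cast
    ring
  · intro σ hσ hnot
    have hσ := (Finset.mem_filter.1 hσ).2
    by_contra hne
    have hprod := Finset.prod_ne_zero_iff.1 (right_ne_zero_of_mul hne)
    have hblock (i : Fin k) := mt (hM0 _ _) (hprod i (Finset.mem_univ i))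
    have hlt (i : Fin k) := Fin.lt_def.1 (hσ.2 i)
    obtain ⟨τ, rfl⟩ := exists_wickPerm_eq hσ
      (fun i => by have := hblock i; have := hlt i; omega)
      (fun i => by have := hblock i; have := hlt i; omega)
    exact hnot (Finset.mem_image_of_mem _ (Finset.mem_univ τ))
end

section
/- Let n, k be natural numbers. The iterated mixed derivative at the origin of the entire function (z,w) ↦ exp(z·w)·z^n·w^n of two complex variables satisfies: ∂_z^k ∂_w^k [exp(z·w)·z^n·w^n]│_{z=w=0} = (k!)²/(k−n)! if n ≤ k, and 0 if n > k. Consequently, dividing by k!, one obtains the value k!/(k−n)! for n ≤ k and 0 for n > k (the n-point correlation function, up to the factor 𝒩^n, of the point process associated with a single-mode Fock state with k photons via its Glauber–Sudarshan representation). -/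
/-! By the Leibniz rule in `z`, only the term in which `z ^ n` is differentiated exactly `n` times
survives at `z = 0`, so the inner derivative is the monomial `k! / (k - n)! * w ^ k` when `n ≤ k`,
and vanishes identically otherwise. The `k`-th derivative of `w ^ k` is `k!`. -/

lemma iteratedDeriv_inner (n k : ℕ) (w : ℂ) :
    iteratedDeriv k (fun z : ℂ => Complex.exp (z * w) * z ^ n * w ^ n) 0
      = (if n ≤ k then (k.factorial : ℂ) / ((k - n).factorial : ℂ) else 0) * w ^ k := by
  have hcomm : (fun z : ℂ => Complex.exp (z * w) * z ^ n * w ^ n)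
      = fun z : ℂ => (z ^ n * Complex.exp (w * z)) * w ^ n := by
    funext z
    rw [mul_comm z w, mul_comm (Complex.exp _)]
  rw [hcomm, iteratedDeriv_mul_const_field,
    iteratedDeriv_fun_mul (by fun_prop) (by fun_prop)]
  simp only [iteratedDeriv_fun_pow_zero, iteratedDeriv_cexp_const_mul, mul_zero, Complex.exp_zero,
    mul_one, mul_ite, ite_mul, zero_mul, Finset.sum_ite_eq', Finset.mem_range, Order.lt_add_one_iff,
    Nat.cast_ite, Nat.cast_zero]
  split_ifs with h
  · rw [Nat.cast_choose ℂ h, ← pow_sub_mul_pow w h]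
    have := Nat.factorial_ne_zero n
    field_simp
  · rfl

/-- **Glauber–Sudarshan derivatives for a single-mode Fock state.**
For natural numbers `n, k`, the mixed derivative at the origin of
`(z,w) ↦ exp(z·w)·z^n·w^n` satisfies
`∂_z^k ∂_w^k [exp(z·w)·z^n·w^n]│_{z=w=0} = (k!)²/(k−n)!` if `n ≤ k`, and `0`
otherwise; consequently, dividing by `k!` gives `k!/(k−n)!` for `n ≤ k` and `0`
for `n > k`. -/
theorem iteratedDeriv_exp_mul_monomial (n k : ℕ) :
    iteratedDeriv k
        (fun w : ℂ => iteratedDeriv k (fun z : ℂ => Complex.exp (z * w) * z ^ n * w ^ n) 0) 0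
      = (if n ≤ k then ((k.factorial : ℂ)) ^ 2 / ((k - n).factorial : ℂ) else 0) ∧
    (k.factorial : ℂ)⁻¹ *
        iteratedDeriv k
          (fun w : ℂ => iteratedDeriv k (fun z : ℂ => Complex.exp (z * w) * z ^ n * w ^ n) 0) 0
      = (if n ≤ k then ((k.factorial : ℂ)) / ((k - n).factorial : ℂ) else 0) := by
  have key : iteratedDeriv k
        (fun w : ℂ => iteratedDeriv k (fun z : ℂ => Complex.exp (z * w) * z ^ n * w ^ n) 0) 0
      = (if n ≤ k then ((k.factorial : ℂ)) ^ 2 / ((k - n).factorial : ℂ) else 0) := by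
    simp only [iteratedDeriv_inner]
    rw [iteratedDeriv_const_mul_field, iteratedDeriv_fun_pow_zero, if_pos rfl]
    split_ifs
    · ring
    · ring
  refine ⟨key, ?_⟩
  rw [key]
  have hk : (k.factorial : ℂ) ≠ 0 := by exact_mod_cast k.factorial_ne_zero
  split_ifs
  · field_simp
  · simp
end

section
/- Let ι be a countable index set and let x : ι → ℝ satisfy x_i ≥ 0 for all i and be summable. Then the sum over all finite subsets S of ι of the products ∏_{i ∈ S} x_i converges and equals the convergent infinite product ∏_i (1 + x_i). (With x_i = e^{−β(ν_i − ζ)}, this is the fermionic grand-canonical partition function Z_{−1} = ∏_p (1 + e^{−β(ν_p − ζ)}), the sum running over all fermionic occupation-number configurations, where each occupation number is 0 or 1.) -/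
/-!
Expanding a finite product gives `∏ i ∈ T, (1 + x i) = ∑ S ⊆ T, ∏ i ∈ S, x i`. Since `x ≥ 0`, every
partial sum over configurations is dominated by such a product, hence by `exp (∑' i, x i)`, so the
sum over configurations converges. The partial products are then the partial sums over the
powersets of `T`, which are cofinal among finite families of configurations, so the infinite product
converges to the same value (`hasProd_one_add_of_hasSum_prod`).
-/

/-- **Fermionic grand-canonical partition function.** If `x_i ≥ 0` for all `i` and
`x` is summable over a countable index set, then the sum over all finite subsets `S`
of `ι` (fermionic occupation-number configurations) of `∏_{i∈S} x_i` converges and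
equals the convergent infinite product `∏_i (1 + x_i)`. -/
theorem fermionic_partition_function (ι : Type*) [Countable ι] (x : ι → ℝ)
    (h0 : ∀ i, 0 ≤ x i) (hs : Summable x) :
    Summable (fun S : Finset ι => ∏ i ∈ S, x i) ∧
    Multipliable (fun i => 1 + x i) ∧
    ∑' S : Finset ι, ∏ i ∈ S, x i = ∏' i, (1 + x i) := by
  classical
  -- A finite family `u` of configurations lies in the powerset of its union `T`, so its partial
  -- sum is at most `∏ i ∈ T, (1 + x i) ≤ exp (∑ i ∈ T, x i)`, which is bounded uniformly in `u`.
  have hsum : Summable (fun S : Finset ι => ∏ i ∈ S, x i) := by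
    refine summable_of_sum_le (c := Real.exp (∑' i, x i))
      (fun S => Finset.prod_nonneg fun i _ => h0 i) fun u => ?_
    calc ∑ S ∈ u, ∏ i ∈ S, x i
        ≤ ∑ S ∈ (u.biUnion id).powerset, ∏ i ∈ S, x i :=
          Finset.sum_le_sum_of_subset_of_nonneg
            (fun S hS => Finset.mem_powerset.2 (Finset.subset_biUnion_of_mem id hS))
            fun S _ _ => Finset.prod_nonneg fun i _ => h0 i
      _ = ∏ i ∈ u.biUnion id, (1 + x i) := (Finset.prod_one_add _).symm
      _ ≤ Real.exp (∑ i ∈ u.biUnion id, x i) := Real.prod_one_add_le_exp_sum _ h0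
      _ ≤ Real.exp (∑' i, x i) :=
          Real.exp_le_exp.2 (hs.sum_le_tsum _ fun i _ => h0 i)
  exact ⟨hsum, multipliable_one_add_of_summable_prod hsum, (tprod_one_add hsum).symm⟩
end
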